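/- For real parameters μ > 0 and t with 0 < t < 2 and μ + t > 2, define f_{μ,t} : ℝ → ℝ by f_{μ,t}(x) = 2μx(tx+2)/(μ²x² + (tx+2)²); it maps the interval [0,1] into itself. Then the topological entropy of the induced self-map of [0,1] equals 0. -/

import Mathlib

/-!
The upper half of the Misiurewicz–Szlenk theorem: for a self-map `T` of a bounded set of reals, the
entropy is at most the exponential growth rate of the number of pieces needed for the first `n`
iterates to be monotone or antitone on every piece. Indeed, on one piece the signs can be chosen so
that every summand of `Φ = ∑ k < n, ± T^[k]` is increasing; then `Φ` separates any two points at
least as much as each single iterate does, while `|Φ|` grows at most linearly in `n`. Hence an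
`(n, ε)`-separated set meets each piece in `O(n)` points only.

The normal form is the composition of the increasing Möbius map `u x = μ x / (t x + 2)` with
`u ↦ 2 u / (1 + u ^ 2)`, which increases on `[0, 1]` and decreases afterwards. The set
`R = {x ∈ [0, 1] | 1 ≤ u x}` is forward invariant for `t ≥ -1`, and the map is decreasing on `R` and
increasing off `R`. An orbit therefore changes branch at most once, and sorting points by their
entrance time to `R` needs only `n + 1` pieces.
-/

open Asymptotics Bornology Dynamics ExpGrowth Filter Set
open scoped ENNReal

section ExpGrowth

theorem expGrowthSup_natCast_nonpos_of_isBigO_pow {u : ℕ → ℕ} {d : ℕ}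
    (hu : (fun n ↦ (u n : ℝ)) =O[atTop] fun n ↦ (n : ℝ) ^ d) :
    expGrowthSup (fun n ↦ (u n : ℝ≥0∞)) ≤ 0 := by
  rw [expGrowthSup_le_iff]
  intro b hb
  obtain ⟨r, hr, hrb⟩ := EReal.lt_iff_exists_real_btwn.1 hb
  have hr : 1 < Real.exp r := Real.one_lt_exp_iff.2 (EReal.coe_pos.1 hr)
  have u_isLittleO_exp := hu.trans_isLittleO (isLittleO_pow_const_const_pow_of_one_lt d hr)
  filter_upwards [u_isLittleO_exp.bound one_pos] with n hn
  have hn : (u n : ℝ) ≤ Real.exp (r * n) := by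
    simpa [← Real.exp_nat_mul, mul_comm] using hn
  calc (u n : ℝ≥0∞) = ENNReal.ofReal (u n) := (ENNReal.ofReal_natCast _).symm
    _ ≤ ENNReal.ofReal (Real.exp (r * n)) := ENNReal.ofReal_le_ofReal hn
    _ = EReal.exp (r * n) := by rw [← EReal.exp_coe, EReal.coe_mul, EReal.coe_natCast]
    _ ≤ EReal.exp (b * n) := by gcongr

theorem isBigO_floor_mul_add_one (C : ℝ) :
    (fun n : ℕ ↦ ((⌊n * C⌋₊ + 1 : ℕ) : ℝ)) =O[atTop] fun n ↦ (n : ℝ) ^ 1 := by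
  refine IsBigO.of_bound (|C| + 1) ?_
  filter_upwards [eventually_ge_atTop 1] with n hn
  have one_le_n : (1 : ℝ) ≤ n := by exact_mod_cast hn
  have floor_le : (⌊n * C⌋₊ : ℝ) ≤ n * |C| :=
    (Nat.cast_le.2 (Nat.floor_le_floor (by gcongr; exact le_abs_self C))).trans
      (Nat.floor_le (by positivity))
  rw [pow_one, Real.norm_natCast, Real.norm_natCast]
  push_cast
  linarith

end ExpGrowth

section Separation

variable {α ι : Type*}

theorem exists_abs_le_sum_and_dist_le_dist [LinearOrder α] {J : Set α} {s : Finset ι}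
    {f : ι → α → ℝ} (hf : ∀ k ∈ s, MonotoneOn (f k) J ∨ AntitoneOn (f k) J) :
    ∃ Φ : α → ℝ, (∀ x, |Φ x| ≤ ∑ k ∈ s, |f k x|) ∧
      ∀ x ∈ J, ∀ y ∈ J, ∀ k ∈ s, dist (f k x) (f k y) ≤ dist (Φ x) (Φ y) := by
  have exists_sign : ∀ k, ∃ σ : ℝ, |σ| = 1 ∧ (k ∈ s → MonotoneOn (fun x ↦ σ * f k x) J) := by
    intro k
    by_cases hk : k ∈ s
    · obtain hmono | hanti := hf k hk
      · exact ⟨1, abs_one, fun _ ↦ by simpa only [one_mul] using hmono⟩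
      · exact ⟨-1, by simp, fun _ ↦ by simpa only [neg_one_mul] using hanti.neg⟩
    · exact ⟨1, abs_one, fun h ↦ absurd h hk⟩
  choose σ abs_σ monotone_σ using exists_sign
  refine ⟨fun x ↦ ∑ k ∈ s, σ k * f k x, fun x ↦ ?_, fun x hx y hy k hk ↦ ?_⟩
  · simpa only [abs_mul, abs_σ, one_mul] using Finset.abs_sum_le_sum_abs (fun k ↦ σ k * f k x) s
  wlog hxy : x ≤ y generalizing x y
  · rw [dist_comm (f k x), dist_comm (∑ k ∈ s, σ k * f k x)]
    exact this y hy x hx (le_of_not_ge hxy)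
  calc dist (f k x) (f k y) = |σ k * f k y - σ k * f k x| := by
        rw [← mul_sub, abs_mul, abs_σ, one_mul, dist_comm, Real.dist_eq]
    _ = σ k * f k y - σ k * f k x := abs_of_nonneg (sub_nonneg.2 (monotone_σ k hk hx hy hxy))
    _ ≤ ∑ j ∈ s, (σ j * f j y - σ j * f j x) :=
        Finset.single_le_sum (fun j hj ↦ sub_nonneg.2 (monotone_σ j hj hx hy hxy)) hk
    _ = (∑ j ∈ s, σ j * f j y) - ∑ j ∈ s, σ j * f j x := Finset.sum_sub_distrib ..
    _ ≤ dist (∑ j ∈ s, σ j * f j x) (∑ j ∈ s, σ j * f j y) := by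
        rw [dist_comm]
        exact le_abs_self _

theorem card_le_floor_add_one_of_pairwise_le_dist {s : Finset α} {Φ : α → ℝ} {a b ε : ℝ}
    (hε : 0 < ε) (hΦ : ∀ x ∈ s, Φ x ∈ Icc a b)
    (hs : (s : Set α).Pairwise fun x y ↦ ε ≤ dist (Φ x) (Φ y)) :
    s.card ≤ ⌊(b - a) / ε⌋₊ + 1 := by
  rw [← Finset.card_range (⌊(b - a) / ε⌋₊ + 1)]
  have quotient_nonneg : ∀ x ∈ s, 0 ≤ (Φ x - a) / ε := fun x hx ↦
    div_nonneg (sub_nonneg.2 (hΦ x hx).1) hε.le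
  refine Finset.card_le_card_of_injOn (fun x ↦ ⌊(Φ x - a) / ε⌋₊) (fun x hx ↦ ?_)
    fun x hx y hy natFloor_eq ↦ ?_
  · rw [Finset.coe_range, mem_Iio, Nat.lt_succ_iff]
    exact Nat.floor_le_floor (div_le_div_of_nonneg_right (sub_le_sub_right (hΦ x hx).2 a) hε.le)
  · by_contra hxy
    have floor_eq : ⌊(Φ x - a) / ε⌋ = ⌊(Φ y - a) / ε⌋ := by
      rw [← Int.natCast_floor_eq_floor (quotient_nonneg x hx),
        ← Int.natCast_floor_eq_floor (quotient_nonneg y hy)]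
      exact congrArg Nat.cast natFloor_eq
    have quotient_dist := Int.abs_sub_lt_one_of_floor_eq_floor floor_eq
    rw [← sub_div, sub_sub_sub_cancel_right, abs_div, abs_of_pos hε, div_lt_one hε] at quotient_dist
    exact (hs hx hy hxy).not_gt quotient_dist

theorem exists_le_dist_iterate_of_isDynNetIn {X : Type*} [PseudoMetricSpace X] {T : X → X}
    {F s : Set X} {ε : ℝ} {n : ℕ} (hε : 0 < ε)
    (hs : IsDynNetIn T F {z | dist z.1 z.2 < ε} n s) {x y : X} (hx : x ∈ s) (hy : y ∈ s)
    (hxy : x ≠ y) : ∃ k < n, ε ≤ dist (T^[k] x) (T^[k] y) := by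
  by_contra! hclose
  refine Set.disjoint_left.1 (hs.2 hx hy hxy) (?_ : y ∈ _) ?_ <;> rw [mem_ball_dynEntourage]
  · exact hclose
  · exact fun k _ ↦ (dist_self (T^[k] y)).trans_lt hε

end Separation

section Laps

/-- `F` is covered by `p` sets on each of which every one of the iterates `T^[0], …, T^[n - 1]` is
monotone or antitone. The least such `p` plays the role of the lap number in the
Misiurewicz–Szlenk theorem; the sets need not be intervals, as `T` may be discontinuous. -/
def HasLapCover {α : Type*} [Preorder α] (T : α → α) (F : Set α) (n p : ℕ) : Prop :=
  ∃ J : Fin p → Set α, F ⊆ ⋃ i, J i ∧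
    ∀ i, ∀ k < n, MonotoneOn T^[k] (J i) ∨ AntitoneOn T^[k] (J i)

variable {T : ℝ → ℝ} {F : Set ℝ}

theorem card_le_of_isDynNetIn_of_monotoneOn_or_antitoneOn {J : Set ℝ} {B ε : ℝ} {n : ℕ}
    {s : Finset ℝ} (hε : 0 < ε) (hB : ∀ x ∈ F, |x| ≤ B) (hT : MapsTo T F F) (hsJ : ↑s ⊆ J)
    (hJ : ∀ k < n, MonotoneOn T^[k] J ∨ AntitoneOn T^[k] J)
    (hs : IsDynNetIn T F {z | dist z.1 z.2 < ε} n s) :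
    s.card ≤ ⌊n * (2 * B / ε)⌋₊ + 1 := by
  obtain ⟨Φ, abs_Φ_le, dist_le_dist_Φ⟩ :=
    exists_abs_le_sum_and_dist_le_dist (s := Finset.range n) fun k hk ↦ hJ k (Finset.mem_range.1 hk)
  have Φ_mem : ∀ x ∈ s, Φ x ∈ Icc (-(n * B)) (n * B) := fun x hx ↦ abs_le.1 <|
    calc |Φ x| ≤ ∑ k ∈ Finset.range n, |T^[k] x| := abs_Φ_le x
      _ ≤ ∑ _k ∈ Finset.range n, B :=
          Finset.sum_le_sum fun k _ ↦ hB _ (hT.iterate k (hs.1 hx))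
      _ = n * B := by rw [Finset.sum_const, Finset.card_range, nsmul_eq_mul]
  have Φ_separates : (s : Set ℝ).Pairwise fun x y ↦ ε ≤ dist (Φ x) (Φ y) := fun x hx y hy hxy ↦ by
    obtain ⟨k, hk, le_dist⟩ := exists_le_dist_iterate_of_isDynNetIn hε hs hx hy hxy
    exact le_dist.trans (dist_le_dist_Φ x (hsJ hx) y (hsJ hy) k (Finset.mem_range.2 hk))
  convert card_le_floor_add_one_of_pairwise_le_dist hε Φ_mem Φ_separates using 3
  ring

theorem netMaxcard_le_of_hasLapCover {B ε : ℝ} {n p : ℕ} (hε : 0 < ε) (hB : ∀ x ∈ F, |x| ≤ B)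
    (hT : MapsTo T F F) (hp : HasLapCover T F n p) :
    netMaxcard T F {z | dist z.1 z.2 < ε} n ≤ ((p * (⌊n * (2 * B / ε)⌋₊ + 1) : ℕ) : ℕ∞) := by
  classical
  obtain ⟨J, F_subset, hJ⟩ := hp
  refine iSup₂_le fun s hs ↦ Nat.cast_le.2 ?_
  have s_subset : s ⊆ Finset.univ.biUnion fun i ↦ {x ∈ s | x ∈ J i} := fun x hx ↦ by
    simpa [hx] using F_subset (hs.1 hx)
  have piece_card_le : ∀ i, {x ∈ s | x ∈ J i}.card ≤ ⌊n * (2 * B / ε)⌋₊ + 1 := fun i ↦ by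
    have piece_subset : ↑{x ∈ s | x ∈ J i} ⊆ (s : Set ℝ) := Finset.filter_subset _ s
    exact card_le_of_isDynNetIn_of_monotoneOn_or_antitoneOn hε hB hT
      (fun x hx ↦ (Finset.mem_filter.1 hx).2) (hJ i)
      ⟨piece_subset.trans hs.1, hs.2.subset piece_subset⟩
  calc s.card ≤ _ := Finset.card_le_card s_subset
    _ ≤ (Finset.univ : Finset (Fin p)).card * (⌊n * (2 * B / ε)⌋₊ + 1) :=
        Finset.card_biUnion_le_card_mul _ _ _ fun i _ ↦ piece_card_le i
    _ = p * (⌊n * (2 * B / ε)⌋₊ + 1) := by rw [Finset.card_univ, Fintype.card_fin]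

theorem coverEntropy_le_expGrowthSup_of_hasLapCover (hF : IsBounded F) (hT : MapsTo T F F)
    {p : ℕ → ℕ} (hp : ∀ n, HasLapCover T F n (p n)) :
    coverEntropy T F ≤ expGrowthSup fun n ↦ (p n : ℝ≥0∞) := by
  obtain ⟨B, hB⟩ := hF.exists_norm_le
  rw [coverEntropy_eq_iSup_basis_netEntropyEntourage Metric.uniformity_basis_dist]
  refine iSup₂_le fun ε hε ↦ ?_
  set q : ℕ → ℕ := fun n ↦ ⌊n * (2 * B / ε)⌋₊ + 1
  have q_growth : expGrowthSup (fun n ↦ (q n : ℝ≥0∞)) ≤ 0 :=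
    expGrowthSup_natCast_nonpos_of_isBigO_pow (isBigO_floor_mul_add_one _)
  obtain p_growth | p_growth := eq_or_ne (expGrowthSup fun n ↦ (p n : ℝ≥0∞)) ⊤
  · exact p_growth ▸ le_top
  calc netEntropyEntourage T F {z | dist z.1 z.2 < ε}
      ≤ expGrowthSup ((fun n ↦ (p n : ℝ≥0∞)) * fun n ↦ (q n : ℝ≥0∞)) := by
        refine expGrowthSup_monotone fun n ↦ ?_
        simpa [q] using ENat.toENNReal_le.2 (netMaxcard_le_of_hasLapCover hε hB hT (hp n))
    _ ≤ expGrowthSup (fun n ↦ (p n : ℝ≥0∞)) + expGrowthSup (fun n ↦ (q n : ℝ≥0∞)) :=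
        expGrowthSup_mul_le (.inr (q_growth.trans_lt EReal.zero_lt_top).ne) (.inl p_growth)
    _ ≤ expGrowthSup fun n ↦ (p n : ℝ≥0∞) := add_le_of_nonpos_right q_growth

end Laps

section AbsorbingSet

variable {α : Type*} {T : α → α} {F R : Set α}

/-- The points of `F` whose orbit first enters `R` at time `m`, the entrance time being truncated
at `n`: for `m = n` the only condition is that the first `n` points of the orbit avoid `R`. -/
def entranceSet (T : α → α) (F R : Set α) (n m : ℕ) : Set α :=
  {x ∈ F | (∀ k < m, T^[k] x ∉ R) ∧ (m < n → T^[m] x ∈ R)}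

theorem subset_iUnion_entranceSet (T : α → α) (F R : Set α) (n : ℕ) :
    F ⊆ ⋃ m : Fin (n + 1), entranceSet T F R n m := by
  classical
  intro x hx
  rw [mem_iUnion]
  have exists_entrance : ∃ m, m < n → T^[m] x ∈ R := ⟨n, fun h ↦ absurd h n.lt_irrefl⟩
  refine ⟨⟨Nat.find exists_entrance, Nat.lt_succ_of_le (Nat.find_le fun h ↦ absurd h n.lt_irrefl)⟩,
    hx, fun k hk ↦ ?_, Nat.find_spec exists_entrance⟩
  exact (Classical.not_imp.1 (Nat.find_min exists_entrance hk)).2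

variable [Preorder α]

theorem monotoneOn_or_antitoneOn_iterate {J : Set α} {n : ℕ}
    (h : ∀ k < n, MonotoneOn T (T^[k] '' J) ∨ AntitoneOn T (T^[k] '' J)) :
    MonotoneOn T^[n] J ∨ AntitoneOn T^[n] J := by
  induction n with
  | zero => exact .inl monotoneOn_id
  | succ n ih =>
    rw [Function.iterate_succ']
    have hJ := mapsTo_image T^[n] J
    obtain hT | hT := h n n.lt_succ_self <;>
      obtain hn | hn := ih fun k hk ↦ h k (hk.trans n.lt_succ_self)
    · exact .inl (hT.comp hn hJ)
    · exact .inr (hT.comp_AntitoneOn hn hJ)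
    · exact .inr (hT.comp_MonotoneOn hn hJ)
    · exact .inl (hT.comp hn hJ)

theorem hasLapCover_of_mapsTo (hT : MapsTo T F F) (hR : MapsTo T R R)
    (hTR : MonotoneOn T R ∨ AntitoneOn T R)
    (hTF : MonotoneOn T (F \ R) ∨ AntitoneOn T (F \ R)) (n : ℕ) : HasLapCover T F n (n + 1) := by
  refine ⟨fun m ↦ entranceSet T F R n m, subset_iUnion_entranceSet T F R n, fun m k hk ↦
    monotoneOn_or_antitoneOn_iterate fun j hj ↦ ?_⟩
  obtain hjm | hmj := lt_or_ge j m
  · have image_subset : T^[j] '' entranceSet T F R n m ⊆ F \ R :=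
      image_subset_iff.2 fun x hx ↦ ⟨hT.iterate j hx.1, hx.2.1 j hjm⟩
    exact hTF.imp (·.mono image_subset) (·.mono image_subset)
  · have image_subset : T^[j] '' entranceSet T F R n m ⊆ R := image_subset_iff.2 fun x hx ↦ by
      have entered : T^[m] x ∈ R := hx.2.2 (hmj.trans_lt (hj.trans hk))
      rw [mem_preimage, ← Nat.sub_add_cancel hmj, Function.iterate_add_apply]
      exact hR.iterate (j - m) entered
    exact hTR.imp (·.mono image_subset) (·.mono image_subset)

theorem coverEntropy_eq_zero_of_mapsTo {T : ℝ → ℝ} {F R : Set ℝ} (hF : IsBounded F)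
    (hF₀ : F.Nonempty) (hT : MapsTo T F F) (hR : MapsTo T R R)
    (hTR : MonotoneOn T R ∨ AntitoneOn T R)
    (hTF : MonotoneOn T (F \ R) ∨ AntitoneOn T (F \ R)) : coverEntropy T F = 0 := by
  refine le_antisymm ?_ (coverEntropy_nonneg T hF₀)
  refine (coverEntropy_le_expGrowthSup_of_hasLapCover hF hT
    (hasLapCover_of_mapsTo hT hR hTR hTF)).trans ?_
  exact expGrowthSup_natCast_nonpos_of_isBigO_pow (d := 1) <| by
    simpa using isBigO_floor_mul_add_one 1

end AbsorbingSet

section NormalForm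

/-- The map `u ↦ 2 u / (1 + u ^ 2)`, i.e. `sin (2 * arctan u)`: the fold through which the normal
form factors. -/
noncomputable def sineFold (u : ℝ) : ℝ := 2 * u / (1 + u ^ 2)

theorem sineFold_nonneg {u : ℝ} (hu : 0 ≤ u) : 0 ≤ sineFold u := by
  unfold sineFold
  positivity

theorem sineFold_le_one (u : ℝ) : sineFold u ≤ 1 :=
  div_le_one_of_le₀ (by linarith [sq_nonneg (u - 1)]) (by positivity)

theorem sineFold_le_sineFold_iff {u v : ℝ} :
    sineFold u ≤ sineFold v ↔ 0 ≤ (v - u) * (1 - u * v) := by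
  rw [sineFold, sineFold, div_le_div_iff₀ (by positivity) (by positivity)]
  constructor <;> intro h <;> linarith

theorem monotoneOn_sineFold : MonotoneOn sineFold (Icc (-1) 1) := fun u hu v hv huv ↦
  sineFold_le_sineFold_iff.2 <| mul_nonneg (sub_nonneg.2 huv) <| sub_nonneg.2 <|
    (le_abs_self _).trans <| abs_mul u v ▸ mul_le_one₀ (abs_le.2 hu) (abs_nonneg v) (abs_le.2 hv)

theorem antitoneOn_sineFold : AntitoneOn sineFold (Ici 1) := fun _ hu _ hv huv ↦
  sineFold_le_sineFold_iff.2 <| mul_nonneg_of_nonpos_of_nonpos (sub_nonpos.2 huv) <|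
    sub_nonpos.2 (one_le_mul_of_one_le_of_one_le hv hu)

/-- The Möbius map `x ↦ μ x / (t x + 2)`, the inner factor of the normal form. -/
noncomputable def innerMobius (μ t x : ℝ) : ℝ := μ * x / (t * x + 2)

/-- The normal-form map `f_{μ,t}`, whose entropy on `[0, 1]` is computed. -/
noncomputable def normalForm (μ t x : ℝ) : ℝ :=
  2 * μ * x * (t * x + 2) / (μ ^ 2 * x ^ 2 + (t * x + 2) ^ 2)

variable {μ t : ℝ}

theorem normalForm_eq_sineFold_innerMobius {x : ℝ} (hx : t * x + 2 ≠ 0) :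
    normalForm μ t x = sineFold (innerMobius μ t x) := by
  rw [normalForm, sineFold, innerMobius]
  generalize t * x + 2 = a at hx ⊢
  have : μ ^ 2 * x ^ 2 + a ^ 2 ≠ 0 := by positivity
  have : 1 + (μ * x / a) ^ 2 ≠ 0 := by positivity
  field_simp
  ring

theorem mul_add_two_pos (ht : -2 < t) {x : ℝ} (hx : x ∈ Icc (0 : ℝ) 1) : 0 < t * x + 2 := by
  obtain hx₀ | hx₀ := hx.1.eq_or_lt
  · simp [← hx₀]
  · linarith [mul_lt_mul_of_pos_right ht hx₀, hx.2]

theorem innerMobius_nonneg (hμ : 0 ≤ μ) (ht : -2 < t) {x : ℝ} (hx : x ∈ Icc (0 : ℝ) 1) :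
    0 ≤ innerMobius μ t x :=
  div_nonneg (mul_nonneg hμ hx.1) (mul_add_two_pos ht hx).le

theorem monotoneOn_innerMobius (hμ : 0 ≤ μ) (ht : -2 < t) :
    MonotoneOn (innerMobius μ t) (Icc 0 1) := fun x hx y hy hxy ↦ by
  rw [innerMobius, innerMobius,
    div_le_div_iff₀ (mul_add_two_pos ht hx) (mul_add_two_pos ht hy)]
  linarith [mul_le_mul_of_nonneg_left hxy hμ]

theorem eqOn_normalForm (ht : -2 < t) :
    EqOn (sineFold ∘ innerMobius μ t) (normalForm μ t) (Icc 0 1) := fun _ hx ↦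
  (normalForm_eq_sineFold_innerMobius (mul_add_two_pos ht hx).ne').symm

theorem mapsTo_normalForm (hμ : 0 ≤ μ) (ht : -2 < t) :
    MapsTo (normalForm μ t) (Icc 0 1) (Icc 0 1) :=
  MapsTo.congr (fun _ hx ↦ ⟨sineFold_nonneg (innerMobius_nonneg hμ ht hx), sineFold_le_one _⟩)
    (eqOn_normalForm ht)

/-- The part of `[0, 1]` past the critical point of the normal form, where its inner factor is at
least `1`; it is empty when there is no critical point in `[0, 1]`. -/
def decreasingLap (μ t : ℝ) : Set ℝ := {x ∈ Icc 0 1 | 1 ≤ innerMobius μ t x}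

theorem antitoneOn_normalForm (hμ : 0 ≤ μ) (ht : -2 < t) :
    AntitoneOn (normalForm μ t) (decreasingLap μ t) :=
  (antitoneOn_sineFold.comp_MonotoneOn ((monotoneOn_innerMobius hμ ht).mono (sep_subset _ _))
    fun _ hx ↦ hx.2).congr ((eqOn_normalForm ht).mono (sep_subset _ _))

theorem monotoneOn_normalForm (hμ : 0 ≤ μ) (ht : -2 < t) :
    MonotoneOn (normalForm μ t) (Icc 0 1 \ decreasingLap μ t) := by
  refine (monotoneOn_sineFold.comp ((monotoneOn_innerMobius hμ ht).mono sdiff_subset)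
    fun x hx ↦ ⟨?_, ?_⟩).congr ((eqOn_normalForm ht).mono sdiff_subset)
  · exact neg_one_lt_zero.le.trans (innerMobius_nonneg hμ ht hx.1)
  · exact le_of_not_ge fun one_le ↦ hx.2 ⟨hx.1, one_le⟩

theorem one_le_innerMobius_sineFold (ht : -1 ≤ t) {w : ℝ} (hw : 1 ≤ w) :
    1 ≤ innerMobius (w * (t + 2)) t (sineFold w) := by
  have sineFold_mem : sineFold w ∈ Icc (0 : ℝ) 1 :=
    ⟨sineFold_nonneg (zero_le_one.trans hw), sineFold_le_one w⟩
  rw [innerMobius, one_le_div (mul_add_two_pos (by linarith) sineFold_mem), ← sub_nonneg]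
  have factored : w * (t + 2) * sineFold w - (t * sineFold w + 2) =
      2 * (w - 1) * ((t + 1) * w + 1) / (1 + w ^ 2) := by
    rw [sineFold]
    field_simp
    ring
  have : 0 ≤ w - 1 := sub_nonneg.2 hw
  have : 0 ≤ t + 1 := by linarith
  rw [factored]
  positivity

theorem one_le_innerMobius_normalForm_one (ht : -1 ≤ t) (h : 1 ≤ innerMobius μ t 1) :
    1 ≤ innerMobius μ t (normalForm μ t 1) := by
  have innerMobius_one : innerMobius μ t 1 * (t + 2) = μ := by
    rw [innerMobius, mul_one, mul_one, div_mul_cancel₀ μ (by linarith)]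
  rw [normalForm_eq_sineFold_innerMobius (by linarith)]
  simpa only [innerMobius_one] using one_le_innerMobius_sineFold ht h

theorem mapsTo_decreasingLap (hμ : 0 ≤ μ) (ht : -1 ≤ t) :
    MapsTo (normalForm μ t) (decreasingLap μ t) (decreasingLap μ t) := fun x hx ↦ by
  have ht₂ : -2 < t := by linarith
  have maps_Icc := mapsTo_normalForm hμ ht₂
  have one_mem : (1 : ℝ) ∈ Icc (0 : ℝ) 1 := right_mem_Icc.2 zero_le_one
  have one_mem_lap : 1 ∈ decreasingLap μ t :=
    ⟨one_mem, hx.2.trans (monotoneOn_innerMobius hμ ht₂ hx.1 one_mem hx.1.2)⟩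
  refine ⟨maps_Icc hx.1, ?_⟩
  calc 1 ≤ innerMobius μ t (normalForm μ t 1) := one_le_innerMobius_normalForm_one ht one_mem_lap.2
    _ ≤ innerMobius μ t (normalForm μ t x) :=
        monotoneOn_innerMobius hμ ht₂ (maps_Icc one_mem) (maps_Icc hx.1)
          (antitoneOn_normalForm hμ ht₂ hx one_mem_lap hx.1.2)

end NormalForm

theorem entropy_zero_on_right_interval_general (μ t : ℝ) (hμ : 0 ≤ μ) (ht : -1 ≤ t) :
    ∃ hmaps : Set.MapsTo
        (fun x : ℝ => 2 * μ * x * (t * x + 2) / (μ ^ 2 * x ^ 2 + (t * x + 2) ^ 2))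
        (Set.Icc (0 : ℝ) 1) (Set.Icc (0 : ℝ) 1),
      Dynamics.coverEntropy (Set.MapsTo.restrict _ _ _ hmaps) Set.univ = (0 : EReal) := by
  have ht₂ : -2 < t := by linarith
  have hmaps := mapsTo_normalForm hμ ht₂
  refine ⟨hmaps, (coverEntropy_restrict hmaps).trans ?_⟩
  exact coverEntropy_eq_zero_of_mapsTo (Metric.isBounded_Icc 0 1) (nonempty_Icc.2 zero_le_one)
    hmaps (mapsTo_decreasingLap hμ ht) (.inr (antitoneOn_normalForm hμ ht₂))
    (.inl (monotoneOn_normalForm hμ ht₂))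

/-- Observation 4.j: for `μ, t > 0` with `t < 2` and `μ + t > 2`, the normal-form map
`f_{μ,t}` preserves `[0,1]` and the topological entropy of the induced self-map of
`[0,1]` vanishes. -/
theorem entropy_zero_on_right_interval (μ t : ℝ) (hμ : 0 < μ) (ht0 : 0 < t) (ht2 : t < 2)
    (hsum : 2 < μ + t) :
    ∃ hmaps : Set.MapsTo
        (fun x : ℝ => 2 * μ * x * (t * x + 2) / (μ ^ 2 * x ^ 2 + (t * x + 2) ^ 2))
        (Set.Icc (0 : ℝ) 1) (Set.Icc (0 : ℝ) 1),
      Dynamics.coverEntropy (Set.MapsTo.restrict _ _ _ hmaps) Set.univ = (0 : EReal) :=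
  entropy_zero_on_right_interval_general μ t hμ.le (by linarith)
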